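/- Let m > 0, t > 0 and x ∈ ℝ with |x| > t. Then the function ε ↦ ∫_ℝ exp(-(ε·t + i·t)·√(p² + m²))·exp(i·p·x) dp (each integral being absolutely convergent for ε > 0) tends, as ε → 0⁺, to 2·i·t·m·K₁(m·√(x² - t²)) / √(x² - t²). -/

import Mathlib

open MeasureTheory Real Set Complex Filter

/-- The modified Bessel function of the second kind (MacDonald function),
`K_ν(z) = ∫₀^∞ exp(-z cosh t) cosh(ν t) dt`. -/
noncomputable def besselK (ν z : ℝ) : ℝ :=
  ∫ t in Set.Ioi (0 : ℝ), Real.exp (-z * Real.cosh t) * Real.cosh (ν * t)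

lemma aux_cosh_lower (u : ℝ) : 1 + u ^ 2 / 2 ≤ Real.cosh u := by
  have h1 : Real.cosh u = 1 + 2 * Real.sinh (u / 2) ^ 2 := by
    have h2 := Real.cosh_two_mul (u / 2)
    rw [Real.cosh_sq, mul_div_cancel₀ u two_ne_zero] at h2
    linarith
  have h3 : |u / 2| ≤ |Real.sinh (u / 2)| := by
    rw [Real.abs_sinh]
    exact Real.self_le_sinh_iff.mpr (abs_nonneg _)
  have h4 := sq_le_sq.mpr h3
  rw [h1]
  nlinarith

lemma aux_int_g (c : ℝ) (hc : 0 < c) :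
    Integrable (fun u : ℝ => Real.cosh u * Real.exp (-c * Real.cosh u)) := by
  have h1 : Integrable (fun u : ℝ => (2 / c) * Real.exp (-(c / 4) * u ^ 2)) :=
    (integrable_exp_neg_mul_sq (by positivity)).const_mul _
  refine h1.mono' (by fun_prop) (Eventually.of_forall fun u => ?_)
  rw [Real.norm_of_nonneg (by positivity)]
  have hcosh : u ^ 2 / 2 ≤ Real.cosh u := by
    have h := aux_cosh_lower u
    linarith
  have h2 : (c / 2) * Real.cosh u ≤ Real.exp ((c / 2) * Real.cosh u) := by
    linarith [Real.add_one_le_exp ((c / 2) * Real.cosh u)]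
  have h3 : Real.cosh u ≤ (2 / c) * Real.exp ((c / 2) * Real.cosh u) := by
    calc Real.cosh u = (2 / c) * ((c / 2) * Real.cosh u) := by field_simp
      _ ≤ _ := by gcongr
  calc Real.cosh u * Real.exp (-c * Real.cosh u)
      ≤ ((2 / c) * Real.exp ((c / 2) * Real.cosh u)) * Real.exp (-c * Real.cosh u) := by gcongr
    _ = (2 / c) * Real.exp (-(c / 2) * Real.cosh u) := by
        rw [mul_assoc, ← Real.exp_add]; ring_nf
    _ ≤ (2 / c) * Real.exp (-(c / 4) * u ^ 2) := by
        gcongr (2 / c) * Real.exp ?_; nlinarith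

lemma aux_tendsto_g (c : ℝ) (hc : 0 < c) :
    Tendsto (fun u : ℝ => Real.cosh u * Real.exp (-c * Real.cosh u)) atTop (nhds 0) := by
  have h := Real.tendsto_pow_mul_exp_neg_atTop_nhds_zero 1
  have hcosh : Tendsto (fun u : ℝ => c * Real.cosh u) atTop atTop := by
    refine Tendsto.const_mul_atTop hc ?_
    refine tendsto_atTop_mono (f := fun u : ℝ => u) (fun u => ?_) tendsto_id
    have h := aux_cosh_lower u
    nlinarith [sq_nonneg (u - 1)]
  have h2 := (h.comp hcosh).const_mul (1 / c)
  simp only [mul_zero] at h2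
  refine h2.congr fun u => ?_
  simp only [Function.comp, pow_one]
  rw [neg_mul]
  field_simp

/-- integrand after the substitution `p = m sinh w`, for complex `w` -/
noncomputable def auxF (m t x ε : ℝ) (w : ℂ) : ℂ :=
  Complex.exp (m * (-((ε * t : ℝ) + Complex.I * t) * Complex.cosh w
    + Complex.I * x * Complex.sinh w)) * (m * Complex.cosh w)

lemma auxF_diff (m t x ε : ℝ) : Differentiable ℂ (auxF m t x ε) := by
  unfold auxF
  fun_prop

lemma aux_norm_cosh (u θ : ℝ) : ‖Complex.cosh (u + θ * Complex.I)‖ ≤ Real.cosh u := by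
  unfold Complex.cosh
  rw [norm_div, Real.cosh_eq]
  have := norm_add_le (Complex.exp (u + θ * Complex.I)) (Complex.exp (-(u + θ * Complex.I)))
  rw [Complex.norm_exp, Complex.norm_exp] at this
  simp at this ⊢
  linarith

lemma auxF_norm (m t x ε : ℝ) (hm : 0 < m) (ht : 0 < t) (hx : t < x) (hε : 0 < ε)
    (u θ : ℝ) (h0 : 0 ≤ θ) (h1 : θ ≤ π / 2) :
    ‖auxF m t x ε (u + θ * Complex.I)‖ ≤
      m * (Real.cosh u * Real.exp (-(m * min (ε * t) (x - t)) * Real.cosh u)) := by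
  have hc : 0 ≤ Real.cos θ := Real.cos_nonneg_of_neg_pi_div_two_le_of_le (by linarith) h1
  have hs : 0 ≤ Real.sin θ := Real.sin_nonneg_of_nonneg_of_le_pi h0 (by linarith [Real.pi_pos])
  have hcs : 1 ≤ Real.cos θ + Real.sin θ := by
    nlinarith [Real.sin_sq_add_cos_sq θ, Real.cos_le_one θ, Real.sin_le_one θ]
  unfold auxF
  rw [norm_mul, norm_mul, Complex.norm_exp, Complex.norm_real, Real.norm_of_nonneg hm.le]
  have hre : ((m : ℂ) * (-((ε * t : ℝ) + Complex.I * t) * Complex.cosh (u + θ * Complex.I)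
    + Complex.I * x * Complex.sinh (u + θ * Complex.I))).re =
    -m * (ε * t * Real.cosh u * Real.cos θ +
      (x * Real.cosh u - t * Real.sinh u) * Real.sin θ) := by
    rw [Complex.cosh_add, Complex.sinh_add, Complex.cosh_mul_I, Complex.sinh_mul_I,
      ← Complex.ofReal_cosh, ← Complex.ofReal_sinh, ← Complex.ofReal_cos, ← Complex.ofReal_sin]
    simp [Complex.cos_ofReal_re, Complex.sin_ofReal_re, Complex.sinh_ofReal_re,
      Complex.cosh_ofReal_re]
    ring
  rw [hre]
  have hle : -m * (ε * t * Real.cosh u * Real.cos θ +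
      (x * Real.cosh u - t * Real.sinh u) * Real.sin θ) ≤
      -(m * min (ε * t) (x - t)) * Real.cosh u := by
    set k := min (ε * t) (x - t) with hk
    have k1 : k ≤ ε * t := min_le_left _ _
    have k2 : k ≤ x - t := min_le_right _ _
    have k0 : 0 < k := lt_min (by positivity) (by linarith)
    have hch := Real.cosh_pos u
    have hsc : Real.sinh u ≤ Real.cosh u := (Real.sinh_lt_cosh u).le
    have a1 : k * Real.cosh u * Real.cos θ ≤ ε * t * Real.cosh u * Real.cos θ := by gcongr
    have a2 : k * Real.cosh u ≤ x * Real.cosh u - t * Real.sinh u := by nlinarith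
    have a3 := mul_le_mul_of_nonneg_right a2 hs
    have a4 : k * Real.cosh u * 1 ≤ k * Real.cosh u * (Real.cos θ + Real.sin θ) := by gcongr
    nlinarith
  calc _ ≤ Real.exp (-(m * min (ε * t) (x - t)) * Real.cosh u) * (m * Real.cosh u) := by
        gcongr
        exact aux_norm_cosh u θ
    _ = _ := by ring

lemma auxF_int (m t x ε : ℝ) (hm : 0 < m) (ht : 0 < t) (hx : t < x) (hε : 0 < ε)
    (θ : ℝ) (h0 : 0 ≤ θ) (h1 : θ ≤ π / 2) :
    Integrable (fun u : ℝ => auxF m t x ε (u + θ * Complex.I)) := by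
  have k0 : 0 < m * min (ε * t) (x - t) :=
    mul_pos hm (lt_min (by positivity) (by linarith))
  refine ((aux_int_g _ k0).const_mul m).mono' ?_
    (Eventually.of_forall fun u => auxF_norm m t x ε hm ht hx hε u θ h0 h1)
  have := (auxF_diff m t x ε).continuous
  exact (this.comp (by fun_prop)).aestronglyMeasurable

lemma auxF_shift (m t x ε : ℝ) (hm : 0 < m) (ht : 0 < t) (hx : t < x) (hε : 0 < ε) :
    ∫ u : ℝ, auxF m t x ε u = ∫ u : ℝ, auxF m t x ε (u + (π / 2 : ℝ) * Complex.I) := by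
  have hpi := Real.pi_pos
  set k := m * min (ε * t) (x - t) with hk
  have k0 : 0 < k := mul_pos hm (lt_min (by positivity) (by linarith))
  have i0 : Integrable (fun u : ℝ => auxF m t x ε u) := by
    simpa using auxF_int m t x ε hm ht hx hε 0 le_rfl (by positivity)
  have i1 := auxF_int m t x ε hm ht hx hε (π / 2) (by positivity) le_rfl
  have T0 := intervalIntegral_tendsto_integral i0 tendsto_neg_atTop_atBot tendsto_id
  have T1 := intervalIntegral_tendsto_integral i1 tendsto_neg_atTop_atBot tendsto_id
  have side : ∀ σ : ℝ → ℝ, (∀ T, Real.cosh (σ T) = Real.cosh T) →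
      Tendsto (fun T : ℝ => Complex.I * ∫ y in (0:ℝ)..(π / 2),
        auxF m t x ε ((σ T : ℝ) + y * Complex.I)) atTop (nhds 0) := by
    intro σ hσ
    have hz := ((aux_tendsto_g k k0).const_mul m).mul_const (π / 2)
    simp only [mul_zero, zero_mul] at hz
    refine squeeze_zero_norm (fun T => ?_) hz
    rw [norm_mul, Complex.norm_I, one_mul]
    refine (intervalIntegral.norm_integral_le_of_norm_le_const (C := m * (Real.cosh T * Real.exp (-k * Real.cosh T))) ?_).trans ?_
    · intro y hy
      rw [uIoc_of_le (by positivity)] at hy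
      have := auxF_norm m t x ε hm ht hx hε (σ T) y hy.1.le hy.2
      rwa [hσ] at this
    · rw [sub_zero, abs_of_pos (by positivity)]
  have S1 := side (fun T => T) (fun _ => rfl)
  have S2 := side (fun T => -T) (fun T => Real.cosh_neg T)
  have lim := ((T0.sub T1).add S1).sub S2
  have zero : ∀ T : ℝ, ((∫ u in (-T)..T, auxF m t x ε u) -
      (∫ u in (-T)..T, auxF m t x ε (u + (π / 2 : ℝ) * Complex.I))
      + Complex.I * (∫ y in (0:ℝ)..(π / 2), auxF m t x ε ((T : ℝ) + y * Complex.I)))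
      - Complex.I * (∫ y in (0:ℝ)..(π / 2), auxF m t x ε ((-T : ℝ) + y * Complex.I)) = 0 := by
    intro T
    have := Complex.integral_boundary_rect_eq_zero_of_differentiableOn (auxF m t x ε)
      ((-T : ℝ) : ℂ) ((T : ℝ) + (π / 2 : ℝ) * Complex.I)
      (auxF_diff m t x ε).differentiableOn
    simpa using this
  have := tendsto_nhds_unique lim (tendsto_const_nhds.congr fun T => (zero T).symm)
  simp only [add_zero, sub_zero] at this
  exact sub_eq_zero.mp this

lemma auxF_top (m t x ε u : ℝ) : auxF m t x ε (u + (π / 2 : ℝ) * Complex.I) =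
    Complex.exp (-(m * ε * t * Real.sinh u : ℝ) * Complex.I) *
    (Complex.I * (m * (Real.exp (-m * (x * Real.cosh u - t * Real.sinh u)) * Real.sinh u) : ℝ)) := by
  unfold auxF
  rw [Complex.cosh_add, Complex.sinh_add, Complex.cosh_mul_I, Complex.sinh_mul_I,
      ← Complex.ofReal_cosh, ← Complex.ofReal_sinh, ← Complex.ofReal_cos, ← Complex.ofReal_sin,
      Real.cos_pi_div_two, Real.sin_pi_div_two]
  push_cast
  have : ∀ a b c d : ℂ, Complex.exp a * (Complex.I * (c * (Complex.exp b * d)))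
    = Complex.exp (a + b) * (c * (d * Complex.I)) := by
    intro a b c d; rw [Complex.exp_add]; ring
  rw [this]
  congr 2
  · ring_nf
    simp only [Complex.I_sq]
    ring
  · ring

lemma aux_int_top (m t x : ℝ) (hm : 0 < m) (ht : 0 < t) (hx : t < x) :
    Integrable (fun u : ℝ => m * (Real.exp (-m * (x * Real.cosh u - t * Real.sinh u)) * Real.sinh u)) := by
  have k0 : 0 < m * (x - t) := mul_pos hm (by linarith)
  refine ((aux_int_g _ k0).const_mul m).mono' (by fun_prop) (Eventually.of_forall fun u => ?_)
  rw [norm_mul, norm_mul, Real.norm_of_nonneg hm.le, Real.norm_of_nonneg (Real.exp_pos _).le,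
    mul_comm (Real.exp _)]
  have hsc : Real.sinh u ≤ Real.cosh u := (Real.sinh_lt_cosh u).le
  have hab : ‖Real.sinh u‖ ≤ Real.cosh u := by
    rw [Real.norm_eq_abs, abs_le]
    refine ⟨?_, hsc⟩
    have := (Real.sinh_lt_cosh (-u)).le
    rw [Real.sinh_neg, Real.cosh_neg] at this
    linarith
  have : -m * (x * Real.cosh u - t * Real.sinh u) ≤ -(m * (x - t)) * Real.cosh u := by
    nlinarith [mul_le_mul_of_nonneg_left hsc (mul_pos hm ht).le]
  gcongr

lemma aux_limit_val (m t x : ℝ) (hm : 0 < m) (ht : 0 < t) (hx : t < x) :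
    ∫ u : ℝ, m * (Real.exp (-m * (x * Real.cosh u - t * Real.sinh u)) * Real.sinh u) =
    2 * t * m * (besselK 1 (m * Real.sqrt (x ^ 2 - t ^ 2)) / Real.sqrt (x ^ 2 - t ^ 2)) := by
  set s := Real.sqrt (x ^ 2 - t ^ 2) with hs
  have hpos : 0 < x ^ 2 - t ^ 2 := by nlinarith
  have s0 : 0 < s := Real.sqrt_pos.mpr hpos
  have s2 : s ^ 2 = x ^ 2 - t ^ 2 := Real.sq_sqrt hpos.le
  set a := Real.arsinh (t / s) with ha
  have hsa : Real.sinh a = t / s := Real.sinh_arsinh _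
  have hca : Real.cosh a = x / s := by
    have h1 := Real.cosh_sq a
    rw [hsa] at h1
    have h2 : Real.cosh a ^ 2 = (x / s) ^ 2 := by
      rw [h1, div_pow, div_pow]; field_simp; linarith
    have hx0 : 0 < x := by linarith
    exact (pow_left_inj₀ (Real.cosh_pos a).le (by positivity) two_ne_zero).mp h2
  have ms : 0 < m * s := mul_pos hm s0
  have I1 := aux_int_g (m * s) ms
  have I2 : Integrable (fun u : ℝ => Real.sinh u * Real.exp (-(m * s) * Real.cosh u)) := by
    refine I1.mono' (by fun_prop) (Eventually.of_forall fun u => ?_)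
    rw [norm_mul, Real.norm_of_nonneg (Real.exp_pos _).le]
    gcongr
    rw [Real.norm_eq_abs, abs_le]
    refine ⟨?_, (Real.sinh_lt_cosh u).le⟩
    have := (Real.sinh_lt_cosh (-u)).le
    rw [Real.sinh_neg, Real.cosh_neg] at this
    linarith
  have odd : ∫ u : ℝ, Real.sinh u * Real.exp (-(m * s) * Real.cosh u) = 0 := by
    have := integral_neg_eq_self (fun u : ℝ => Real.sinh u * Real.exp (-(m * s) * Real.cosh u)) volume
    simp only [Real.sinh_neg, Real.cosh_neg, neg_mul, integral_neg] at this
    simp only [neg_mul]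
    linarith
  have even : ∫ u : ℝ, Real.cosh u * Real.exp (-(m * s) * Real.cosh u) = 2 * besselK 1 (m * s) := by
    have := integral_comp_abs (f := fun u : ℝ => Real.cosh u * Real.exp (-(m * s) * Real.cosh u))
    simp only [Real.cosh_abs] at this
    rw [this, besselK]
    congr 2
    ext u
    rw [one_mul, mul_comm]
  rw [← integral_add_right_eq_self _ a]
  have key : ∀ u : ℝ, m * (Real.exp (-m * (x * Real.cosh (u + a) - t * Real.sinh (u + a))) * Real.sinh (u + a))
      = (m * (x / s)) * (Real.sinh u * Real.exp (-(m * s) * Real.cosh u)) +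
        (m * (t / s)) * (Real.cosh u * Real.exp (-(m * s) * Real.cosh u)) := by
    intro u
    have e : x * Real.cosh (u + a) - t * Real.sinh (u + a) = s * Real.cosh u := by
      rw [Real.cosh_add, Real.sinh_add, hsa, hca]
      field_simp
      rw [s2]; ring
    rw [e, Real.sinh_add, hsa, hca]
    ring_nf
  simp_rw [key]
  rw [integral_add (I2.const_mul _) (I1.const_mul _), integral_const_mul, integral_const_mul,
    odd, even]
  ring

lemma aux_subst (m t x ε u : ℝ) (hm : 0 < m) :
    |m * Real.cosh u| • (Complex.exp (-((ε * t : ℝ) + Complex.I * t) * Real.sqrt ((m * Real.sinh u) ^ 2 + m ^ 2)) *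
          Complex.exp (Complex.I * (m * Real.sinh u : ℝ) * x)) = auxF m t x ε u := by
  have h : Real.sqrt ((m * Real.sinh u) ^ 2 + m ^ 2) = m * Real.cosh u := by
    have : (m * Real.sinh u) ^ 2 + m ^ 2 = (m * Real.cosh u) ^ 2 := by
      rw [mul_pow, mul_pow, Real.cosh_sq]; ring
    rw [this, Real.sqrt_sq (by positivity)]
  rw [h, abs_of_pos (by positivity), ← Complex.exp_add, auxF, Complex.real_smul, mul_comm]
  push_cast
  congr 2
  ring

lemma aux_pos (m t x : ℝ) (hm : 0 < m) (ht : 0 < t) (hx : t < x) :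
    (∀ ε : ℝ, 0 < ε → Integrable (fun p : ℝ =>
        Complex.exp (-((ε * t : ℝ) + Complex.I * t) * Real.sqrt (p ^ 2 + m ^ 2)) *
          Complex.exp (Complex.I * p * x)) volume) ∧
    Tendsto (fun ε : ℝ =>
        ∫ p : ℝ, Complex.exp (-((ε * t : ℝ) + Complex.I * t) * Real.sqrt (p ^ 2 + m ^ 2)) *
          Complex.exp (Complex.I * p * x))
      (nhdsWithin 0 (Set.Ioi 0))
      (nhds (2 * Complex.I * t * m *
        (besselK 1 (m * Real.sqrt (x ^ 2 - t ^ 2)) / Real.sqrt (x ^ 2 - t ^ 2) : ℝ))) := by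
  have hd : ∀ u ∈ (univ : Set ℝ), HasDerivWithinAt (fun u : ℝ => m * Real.sinh u)
      (m * Real.cosh u) univ u := fun u _ =>
    ((Real.hasDerivAt_sinh u).const_mul m).hasDerivWithinAt
  have hinj : InjOn (fun u : ℝ => m * Real.sinh u) univ := by
    intro a _ b _ h
    exact Real.sinh_injective (mul_left_cancel₀ hm.ne' h)
  have himg : (fun u : ℝ => m * Real.sinh u) '' univ = univ := by
    rw [image_univ, range_eq_univ]
    intro y
    obtain ⟨u, hu⟩ := Real.sinh_surjective (y / m)
    exact ⟨u, by simp only [hu]; field_simp⟩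
  constructor
  · intro ε hε
    have h := (integrableOn_image_iff_integrableOn_abs_deriv_smul MeasurableSet.univ hd hinj
      (fun p : ℝ => Complex.exp (-((ε * t : ℝ) + Complex.I * t) * Real.sqrt (p ^ 2 + m ^ 2)) *
          Complex.exp (Complex.I * p * x)))
    rw [himg, integrableOn_univ, integrableOn_univ] at h
    refine h.mpr ?_
    simp_rw [aux_subst m t x ε _ hm]
    simpa using auxF_int m t x ε hm ht hx hε 0 le_rfl (by positivity)
  · have hval : ∀ ε : ℝ, 0 < ε →
        ∫ p : ℝ, Complex.exp (-((ε * t : ℝ) + Complex.I * t) * Real.sqrt (p ^ 2 + m ^ 2)) *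
          Complex.exp (Complex.I * p * x) = ∫ u : ℝ, Complex.exp (-(m * ε * t * Real.sinh u : ℝ) * Complex.I) *
    (Complex.I * (m * (Real.exp (-m * (x * Real.cosh u - t * Real.sinh u)) * Real.sinh u) : ℝ)) := by
      intro ε hε
      have h := (integral_image_eq_integral_abs_deriv_smul MeasurableSet.univ hd hinj
        (fun p : ℝ => Complex.exp (-((ε * t : ℝ) + Complex.I * t) * Real.sqrt (p ^ 2 + m ^ 2)) *
          Complex.exp (Complex.I * p * x)))
      rw [himg, setIntegral_univ, setIntegral_univ] at h
      rw [h]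
      simp_rw [aux_subst m t x ε _ hm]
      rw [auxF_shift m t x ε hm ht hx hε]
      simp_rw [auxF_top]
    have hlim : 2 * Complex.I * t * m *
        (besselK 1 (m * Real.sqrt (x ^ 2 - t ^ 2)) / Real.sqrt (x ^ 2 - t ^ 2) : ℝ) =
        ∫ u : ℝ, (Complex.I * (m * (Real.exp (-m * (x * Real.cosh u - t * Real.sinh u)) * Real.sinh u) : ℝ)) := by
      rw [integral_const_mul, integral_complex_ofReal, aux_limit_val m t x hm ht hx]
      push_cast
      ring
    rw [hlim]
    have hcongr : ∀ᶠ ε : ℝ in nhdsWithin 0 (Ioi 0), _ = _ :=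
      eventually_mem_nhdsWithin.mono fun ε hε => (hval ε hε).symm
    refine Tendsto.congr' hcongr ?_
    refine tendsto_integral_filter_of_dominated_convergence
      (fun u => ‖m * (Real.exp (-m * (x * Real.cosh u - t * Real.sinh u)) * Real.sinh u)‖)
      (Eventually.of_forall fun ε => ?_) (Eventually.of_forall fun ε => Eventually.of_forall fun u => ?_)
      (aux_int_top m t x hm ht hx).norm (Eventually.of_forall fun u => ?_)
    · refine Continuous.aestronglyMeasurable ?_
      fun_prop
    · rw [norm_mul, norm_mul, Complex.norm_I, one_mul, Complex.norm_real, ← Complex.ofReal_neg,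
        Complex.norm_exp_ofReal_mul_I, one_mul]
    · have hc : Continuous (fun ε : ℝ => Complex.exp (-(m * ε * t * Real.sinh u : ℝ) * Complex.I) *
        (Complex.I * (m * (Real.exp (-m * (x * Real.cosh u - t * Real.sinh u)) * Real.sinh u) : ℝ))) := by
        fun_prop
      have := (hc.tendsto 0).mono_left (nhdsWithin_le_nhds (s := Ioi 0))
      simpa using this

/-- Equation (19) of the paper: the `ε → 0⁺` limit of the regularized (1+1)-dimensional
Green function of the square-root operator at spacelike separation `|x| > t > 0`:
`∫_ℝ exp(-(εt + it)√(p² + m²)) exp(i p x) dp → 2 i t m K₁(m √(x² - t²)) / √(x² - t²)`. -/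
theorem tendsto_regularized_green_one_dim (m t x : ℝ) (hm : 0 < m) (ht : 0 < t)
    (hx : t < |x|) :
    (∀ ε : ℝ, 0 < ε → Integrable (fun p : ℝ =>
        Complex.exp (-((ε * t : ℝ) + Complex.I * t) * Real.sqrt (p ^ 2 + m ^ 2)) *
          Complex.exp (Complex.I * p * x)) volume) ∧
    Tendsto (fun ε : ℝ =>
        ∫ p : ℝ, Complex.exp (-((ε * t : ℝ) + Complex.I * t) * Real.sqrt (p ^ 2 + m ^ 2)) *
          Complex.exp (Complex.I * p * x))
      (nhdsWithin 0 (Set.Ioi 0))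
      (nhds (2 * Complex.I * t * m *
        (besselK 1 (m * Real.sqrt (x ^ 2 - t ^ 2)) / Real.sqrt (x ^ 2 - t ^ 2) : ℝ))) := by
  rcases le_total 0 x with h | h
  · rw [abs_of_nonneg h] at hx
    exact aux_pos m t x hm ht hx
  · rw [abs_of_nonpos h] at hx
    obtain ⟨h1, h2⟩ := aux_pos m t (-x) hm ht hx
    constructor
    · intro ε hε
      have := (h1 ε hε).comp_neg
      simpa using this
    · rw [neg_sq] at h2
      refine h2.congr fun ε => ?_
      rw [← integral_neg_eq_self]
      simp
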